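/- arXiv:1707.00970 — 4 statements merged into one kernel-verified Lean document; each statement's English description precedes it below -/
import Mathlib

section
/- Let (a,B_a) be a NIS-Lie superalgebra over a field K of characteristic 2 with B_a odd. Let D be an odd derivation of a and a_0 ∈ a_0 satisfy B_a(D(u),v) + B_a(u,D(v)) = 0 for all u,v ∈ a, B_a(u,D(u)) = 0 for all u ∈ a_0, D² = ad_{a_0}, and D(a_0) = 0. Let α be a quadratic form on a_1 with polar form B_α(u,v) = B_a(D(u),v), and let m ∈ K. Then on g := Kx ⊕ a ⊕ Ke with x even and e odd, the squaring s_g(u + μe) := s_a(u) + (μ²m + α(u))x + μ²a_0 + μD(u) for u + μe ∈ g_1, together with the bracket [x,g]_g := 0, [u,v]_g := [u,v]_a + B_a(D(u),v)x for u,v ∈ a, and [e,u]_g := D(u), defines a Lie superalgebra structure on g; moreover the bilinear form B_g determined by B_g|_{a×a} = B_a, B_g(a,x) = B_g(a,e) = 0, B_g(x,e) = 1, B_g(x,x) = B_g(e,e) = 0 is odd, non-degenerate, symmetric and invariant, so that (g,B_g) is a NIS-Lie superalgebra (the D_od-extension of (a,B_a) by means of D and a_0). -/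
/-!
Common definitions: Lie superalgebras in characteristic 2 (encoded by their even
part `g0`, odd part `g1`, bracket components and squaring), NIS forms (even and odd),
homogeneous derivations, isometries, ideals, irreducibility, and the structure
formulas of the various double extensions.
-/

namespace Char2DoubleExt

section Defs

variable (K : Type) [Field K]
variable (g0 g1 h0 h1 : Type)
variable [AddCommGroup g0] [Module K g0] [AddCommGroup g1] [Module K g1]
variable [AddCommGroup h0] [Module K h0] [AddCommGroup h1] [Module K h1]

/-- A Lie superalgebra over a field of characteristic 2: `g0` is the even part,
`g1` the odd part, `br0` the bracket on `g0`, `br1` the action of `g0` on `g1`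
(the mixed bracket, extended symmetrically), `br11` the bracket of two odd
elements, and `sq` the squaring, whose polarization is `br11`. -/
structure SuperAlg : Type where
  br0 : g0 →ₗ[K] g0 →ₗ[K] g0
  br1 : g0 →ₗ[K] g1 →ₗ[K] g1
  br11 : g1 →ₗ[K] g1 →ₗ[K] g0
  sq : g1 → g0
  sq_smul : ∀ (c : K) (f : g1), sq (c • f) = (c * c) • sq f
  sq_add : ∀ f g : g1, sq (f + g) = sq f + sq g + br11 f g
  br0_self : ∀ x : g0, br0 x x = 0
  br11_comm : ∀ f g : g1, br11 f g = br11 g f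
  jacobi0 : ∀ x y z : g0, br0 x (br0 y z) + br0 y (br0 z x) + br0 z (br0 x y) = 0
  act_br : ∀ (x y : g0) (f : g1), br1 (br0 x y) f = br1 x (br1 y f) + br1 y (br1 x f)
  jacobi_mix : ∀ (x : g0) (f g : g1),
    br0 x (br11 f g) + br11 f (br1 x g) + br11 g (br1 x f) = 0
  sq_br0 : ∀ (f : g1) (x : g0), br0 (sq f) x = br11 f (br1 x f)
  sq_br1 : ∀ f g : g1, br1 (sq f) g = br1 (br11 f g) f

/-- A non-degenerate invariant supersymmetric *even* bilinear form on a Lie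
superalgebra in characteristic 2: it pairs `g0` with `g0` (component `B0`) and
`g1` with `g1` (component `B1`); mixed pairings vanish by evenness. -/
structure EvenNIS (S : SuperAlg K g0 g1) : Type where
  B0 : g0 →ₗ[K] g0 →ₗ[K] K
  B1 : g1 →ₗ[K] g1 →ₗ[K] K
  symm0 : ∀ x y, B0 x y = B0 y x
  symm1 : ∀ f g, B1 f g = B1 g f
  alt1 : ∀ f, B1 f f = 0
  nondeg0 : ∀ x, (∀ y, B0 x y = 0) → x = 0
  nondeg1 : ∀ f, (∀ g, B1 f g = 0) → f = 0
  inv0 : ∀ x y z, B0 (S.br0 x y) z = B0 x (S.br0 y z)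
  inv1 : ∀ (x : g0) (f g : g1), B1 (S.br1 x f) g = B0 x (S.br11 f g)
  inv2 : ∀ (f g : g1) (x : g0), B0 (S.br11 f g) x = B1 f (S.br1 x g)

/-- A non-degenerate invariant supersymmetric *odd* bilinear form: it pairs `g0`
with `g1` (component `Bo`); like-parity pairings vanish by oddness, and
`B(f,f) = 0` for odd `f` is automatic. -/
structure OddNIS (S : SuperAlg K g0 g1) : Type where
  Bo : g0 →ₗ[K] g1 →ₗ[K] K
  nondeg0 : ∀ x, (∀ f, Bo x f = 0) → x = 0
  nondeg1 : ∀ f, (∀ x, Bo x f = 0) → f = 0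
  inv0 : ∀ (x y : g0) (f : g1), Bo (S.br0 x y) f = Bo x (S.br1 y f)
  inv1 : ∀ (x y : g0) (f : g1), Bo y (S.br1 x f) = Bo x (S.br1 y f)
  inv2 : ∀ f g h : g1, Bo (S.br11 f g) h = Bo (S.br11 g h) f

/-- An even derivation of a Lie superalgebra in characteristic 2. -/
structure EvenDer (S : SuperAlg K g0 g1) : Type where
  D0 : g0 →ₗ[K] g0
  D1 : g1 →ₗ[K] g1
  der0 : ∀ x y, D0 (S.br0 x y) = S.br0 (D0 x) y + S.br0 x (D0 y)
  der1 : ∀ x f, D1 (S.br1 x f) = S.br1 (D0 x) f + S.br1 x (D1 f)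
  der_sq : ∀ f, D0 (S.sq f) = S.br11 (D1 f) f

/-- An odd derivation of a Lie superalgebra in characteristic 2. -/
structure OddDer (S : SuperAlg K g0 g1) : Type where
  D0 : g0 →ₗ[K] g1
  D1 : g1 →ₗ[K] g0
  der0 : ∀ x y, D0 (S.br0 x y) = S.br1 x (D0 y) + S.br1 y (D0 x)
  der1 : ∀ x f, D1 (S.br1 x f) = S.br11 (D0 x) f + S.br0 x (D1 f)
  der_sq : ∀ f, D0 (S.sq f) = S.br1 (D1 f) f

/-- An isometry between Lie superalgebras endowed with even NIS forms: an even
linear bijection preserving brackets, squarings and the bilinear forms. -/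
structure EvenIsometry (S : SuperAlg K g0 g1) (N : EvenNIS K g0 g1 S)
    (S' : SuperAlg K h0 h1) (N' : EvenNIS K h0 h1 S') : Type where
  e0 : g0 ≃ₗ[K] h0
  e1 : g1 ≃ₗ[K] h1
  map_br0 : ∀ x y, e0 (S.br0 x y) = S'.br0 (e0 x) (e0 y)
  map_br1 : ∀ x f, e1 (S.br1 x f) = S'.br1 (e0 x) (e1 f)
  map_br11 : ∀ f g, e0 (S.br11 f g) = S'.br11 (e1 f) (e1 g)
  map_sq : ∀ f, e0 (S.sq f) = S'.sq (e1 f)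
  map_B0 : ∀ x y, N'.B0 (e0 x) (e0 y) = N.B0 x y
  map_B1 : ∀ f g, N'.B1 (e1 f) (e1 g) = N.B1 f g

/-- An isometry between Lie superalgebras endowed with odd NIS forms. -/
structure OddIsometry (S : SuperAlg K g0 g1) (N : OddNIS K g0 g1 S)
    (S' : SuperAlg K h0 h1) (N' : OddNIS K h0 h1 S') : Type where
  e0 : g0 ≃ₗ[K] h0
  e1 : g1 ≃ₗ[K] h1
  map_br0 : ∀ x y, e0 (S.br0 x y) = S'.br0 (e0 x) (e0 y)
  map_br1 : ∀ x f, e1 (S.br1 x f) = S'.br1 (e0 x) (e1 f)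
  map_br11 : ∀ f g, e0 (S.br11 f g) = S'.br11 (e1 f) (e1 g)
  map_sq : ∀ f, e0 (S.sq f) = S'.sq (e1 f)
  map_Bo : ∀ x f, N'.Bo (e0 x) (e1 f) = N.Bo x f

/-- A (graded) ideal of a Lie superalgebra in characteristic 2, given by its
even part `I0` and odd part `I1`. -/
def IsIdealPair (S : SuperAlg K g0 g1) (I0 : Submodule K g0) (I1 : Submodule K g1) : Prop :=
  (∀ x ∈ I0, ∀ y, S.br0 x y ∈ I0) ∧ (∀ x ∈ I0, ∀ f, S.br1 x f ∈ I1) ∧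
  (∀ f ∈ I1, ∀ x : g0, S.br1 x f ∈ I1) ∧ (∀ f ∈ I1, ∀ g, S.br11 f g ∈ I0) ∧
  (∀ f ∈ I1, S.sq f ∈ I0)

/-- Irreducibility of a NIS-Lie superalgebra with an even form: it is not the
direct sum of two nonzero mutually orthogonal ideals. -/
def EvenIrreducible (S : SuperAlg K g0 g1) (N : EvenNIS K g0 g1 S) : Prop :=
  ¬ ∃ (I0 J0 : Submodule K g0) (I1 J1 : Submodule K g1),
      IsIdealPair K g0 g1 S I0 I1 ∧ IsIdealPair K g0 g1 S J0 J1 ∧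
      (I0 ≠ ⊥ ∨ I1 ≠ ⊥) ∧ (J0 ≠ ⊥ ∨ J1 ≠ ⊥) ∧
      I0 ⊓ J0 = ⊥ ∧ I0 ⊔ J0 = ⊤ ∧ I1 ⊓ J1 = ⊥ ∧ I1 ⊔ J1 = ⊤ ∧
      (∀ x ∈ I0, ∀ y ∈ J0, N.B0 x y = 0) ∧ (∀ f ∈ I1, ∀ g ∈ J1, N.B1 f g = 0)

/-- Irreducibility of a NIS-Lie superalgebra with an odd form. -/
def OddIrreducible (S : SuperAlg K g0 g1) (N : OddNIS K g0 g1 S) : Prop :=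
  ¬ ∃ (I0 J0 : Submodule K g0) (I1 J1 : Submodule K g1),
      IsIdealPair K g0 g1 S I0 I1 ∧ IsIdealPair K g0 g1 S J0 J1 ∧
      (I0 ≠ ⊥ ∨ I1 ≠ ⊥) ∧ (J0 ≠ ⊥ ∨ J1 ≠ ⊥) ∧
      I0 ⊓ J0 = ⊥ ∧ I0 ⊔ J0 = ⊤ ∧ I1 ⊓ J1 = ⊥ ∧ I1 ⊔ J1 = ⊤ ∧
      (∀ x ∈ I0, ∀ g ∈ J1, N.Bo x g = 0) ∧ (∀ y ∈ J0, ∀ f ∈ I1, N.Bo y f = 0)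

/-- An ideal of a Lie superalgebra given as a pair of subsets (closed under the
vector space operations, brackets with arbitrary elements, and the squaring). -/
def IsIdealSet (S : SuperAlg K g0 g1) (I0 : Set g0) (I1 : Set g1) : Prop :=
  ((0 : g0) ∈ I0) ∧ (∀ x y, x ∈ I0 → y ∈ I0 → x + y ∈ I0) ∧
  (∀ (c : K) x, x ∈ I0 → c • x ∈ I0) ∧
  ((0 : g1) ∈ I1) ∧ (∀ f g, f ∈ I1 → g ∈ I1 → f + g ∈ I1) ∧
  (∀ (c : K) f, f ∈ I1 → c • f ∈ I1) ∧
  (∀ x ∈ I0, ∀ y, S.br0 x y ∈ I0) ∧ (∀ x ∈ I0, ∀ f, S.br1 x f ∈ I1) ∧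
  (∀ f ∈ I1, ∀ x : g0, S.br1 x f ∈ I1) ∧ (∀ f ∈ I1, ∀ g, S.br11 f g ∈ I0) ∧
  (∀ f ∈ I1, S.sq f ∈ I0)

/-- The even part of the center of a Lie superalgebra. -/
def zEven (S : SuperAlg K g0 g1) : Submodule K g0 :=
  (⨅ y : g0, LinearMap.ker (S.br0.flip y)) ⊓ (⨅ f : g1, LinearMap.ker (S.br1.flip f))

/-- The odd part of the center of a Lie superalgebra. -/
def zOdd (S : SuperAlg K g0 g1) : Submodule K g1 :=
  (⨅ x : g0, LinearMap.ker (S.br1 x)) ⊓ (⨅ g : g1, LinearMap.ker (S.br11.flip g))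

/-- The compatibility conditions between an even NIS `N`, an even derivation `D`
and a quadratic form `al` on the odd part, entering the `D_ev`-extension (even
form case): `B(Du,v)+B(u,Dv)=0`, `B(Du,u)=0` for even `u`, `al` is quadratic and
its polar form is `B(·,D·)`. -/
def DevDataEven (S : SuperAlg K g0 g1) (N : EvenNIS K g0 g1 S)
    (D : EvenDer K g0 g1 S) (al : g1 → K) : Prop :=
  (∀ x y : g0, N.B0 (D.D0 x) y + N.B0 x (D.D0 y) = 0) ∧
  (∀ f g : g1, N.B1 (D.D1 f) g + N.B1 f (D.D1 g) = 0) ∧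
  (∀ x : g0, N.B0 (D.D0 x) x = 0) ∧
  (∀ (c : K) (f : g1), al (c • f) = c * c * al f) ∧
  (∀ f g : g1, N.B1 f (D.D1 g) = al (f + g) - al f - al g)

/-- The structure constants of the `D_ev`-extension `g = Kx ⊕ a ⊕ Kx*` (even
form, even `x`, `x*`); an element of the even part is written `(r, u, s)` for
`r x + u + s x*`, and the constant `c` is the (arbitrary) value `B_g(x*,x*)`. -/
def DevExtEvenFormulas (S : SuperAlg K g0 g1) (N : EvenNIS K g0 g1 S)
    (D : EvenDer K g0 g1 S) (al : g1 → K) (c : K)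
    (T : SuperAlg K (K × g0 × K) g1) (M : EvenNIS K (K × g0 × K) g1 T) : Prop :=
  (∀ (r s r' s' : K) (u u' : g0),
      T.br0 (r, u, s) (r', u', s')
        = (N.B0 (D.D0 u) u', S.br0 u u' + s • D.D0 u' + s' • D.D0 u, 0)) ∧
  (∀ (r s : K) (u : g0) (f : g1), T.br1 (r, u, s) f = S.br1 u f + s • D.D1 f) ∧
  (∀ f : g1, T.sq f = (al f, S.sq f, 0)) ∧
  (∀ (r s r' s' : K) (u u' : g0),
      M.B0 (r, u, s) (r', u', s') = N.B0 u u' + r * s' + r' * s + c * (s * s')) ∧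
  (∀ f g : g1, M.B1 f g = N.B1 f g)

/-- The compatibility conditions between an even NIS `N`, an odd derivation `D`
and an even element `w = a₀`, entering the `D_od`-extension (even form case):
`B(Du,v) = B(u,Dv)`, `D² = ad_w`, `D(w) = 0`. -/
def DodDataEven (S : SuperAlg K g0 g1) (N : EvenNIS K g0 g1 S)
    (D : OddDer K g0 g1 S) (w : g0) : Prop :=
  (∀ (x : g0) (f : g1), N.B1 (D.D0 x) f = N.B0 x (D.D1 f)) ∧
  (∀ x : g0, D.D1 (D.D0 x) = S.br0 w x) ∧
  (∀ f : g1, D.D0 (D.D1 f) = S.br1 w f) ∧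
  D.D0 w = 0

/-- The structure constants of the `D_od`-extension `g = Kx ⊕ a ⊕ Kx*` (even
form, odd `x`, `x*`); an element of the odd part is written `(r, u, t)` for
`r x + u + t x*`. -/
def DodExtEvenFormulas (S : SuperAlg K g0 g1) (N : EvenNIS K g0 g1 S)
    (D : OddDer K g0 g1 S) (w : g0)
    (T : SuperAlg K g0 (K × g1 × K)) (M : EvenNIS K g0 (K × g1 × K) T) : Prop :=
  (∀ x y : g0, T.br0 x y = S.br0 x y) ∧
  (∀ (x : g0) (r t : K) (u : g1),
      T.br1 x (r, u, t) = (N.B1 (D.D0 x) u, S.br1 x u + t • D.D0 x, 0)) ∧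
  (∀ (r t : K) (u : g1), T.sq (r, u, t) = S.sq u + (t * t) • w + t • D.D1 u) ∧
  (∀ x y : g0, M.B0 x y = N.B0 x y) ∧
  (∀ (r t r' t' : K) (u u' : g1),
      M.B1 (r, u, t) (r', u', t') = N.B1 u u' + r * t' + r' * t)

/-- The compatibility conditions between an odd NIS `No`, an odd derivation `D`,
an even element `w = a₀` and a quadratic form `al`, entering the
`D_od`-extension (odd form case). -/
def DodDataOdd (S : SuperAlg K g0 g1) (No : OddNIS K g0 g1 S)
    (D : OddDer K g0 g1 S) (w : g0) (al : g1 → K) : Prop :=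
  (∀ x y : g0, No.Bo y (D.D0 x) + No.Bo x (D.D0 y) = 0) ∧
  (∀ f g : g1, No.Bo (D.D1 f) g + No.Bo (D.D1 g) f = 0) ∧
  (∀ x : g0, No.Bo x (D.D0 x) = 0) ∧
  (∀ x : g0, D.D1 (D.D0 x) = S.br0 w x) ∧
  (∀ f : g1, D.D0 (D.D1 f) = S.br1 w f) ∧
  D.D0 w = 0 ∧
  (∀ (c : K) (f : g1), al (c • f) = c * c * al f) ∧
  (∀ f g : g1, al (f + g) - al f - al g = No.Bo (D.D1 f) g)

/-- The structure constants of the `D_od`-extension `g = Kx ⊕ a ⊕ Ke` (odd form,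
even `x`, odd `e`); an even element is written `(r, u)` for `r x + u`, an odd
element `(v, μ)` for `v + μ e`. -/
def DodExtOddFormulas (S : SuperAlg K g0 g1) (No : OddNIS K g0 g1 S)
    (D : OddDer K g0 g1 S) (w : g0) (al : g1 → K) (m : K)
    (T : SuperAlg K (K × g0) (g1 × K)) (M : OddNIS K (K × g0) (g1 × K) T) : Prop :=
  (∀ (r r' : K) (x y : g0), T.br0 (r, x) (r', y) = (No.Bo y (D.D0 x), S.br0 x y)) ∧
  (∀ (r μ : K) (x : g0) (v : g1), T.br1 (r, x) (v, μ) = (S.br1 x v + μ • D.D0 x, 0)) ∧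
  (∀ (μ : K) (v : g1),
      T.sq (v, μ) = (μ * μ * m + al v, S.sq v + (μ * μ) • w + μ • D.D1 v)) ∧
  (∀ (r μ : K) (x : g0) (v : g1), M.Bo (r, x) (v, μ) = No.Bo x v + r * μ)

/-- The compatibility condition between an odd NIS `No` and an even derivation
`D`, entering the `D_ev`-extension (odd form case): `B(Du,v)+B(u,Dv)=0`. -/
def DevDataOdd (S : SuperAlg K g0 g1) (No : OddNIS K g0 g1 S)
    (D : EvenDer K g0 g1 S) : Prop :=
  ∀ (x : g0) (v : g1), No.Bo (D.D0 x) v + No.Bo x (D.D1 v) = 0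

/-- The structure constants of the `D_ev`-extension `g = Kx ⊕ a ⊕ Ke` (odd form,
odd `x`, even `e`); an even element is written `(u, ν)` for `u + ν e`, an odd
element `(μ, v)` for `μ x + v`. -/
def DevExtOddFormulas (S : SuperAlg K g0 g1) (No : OddNIS K g0 g1 S)
    (D : EvenDer K g0 g1 S)
    (T : SuperAlg K (g0 × K) (K × g1)) (M : OddNIS K (g0 × K) (K × g1) T) : Prop :=
  (∀ (ν ν' : K) (x y : g0),
      T.br0 (x, ν) (y, ν') = (S.br0 x y + ν • D.D0 y + ν' • D.D0 x, 0)) ∧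
  (∀ (ν μ : K) (x : g0) (v : g1),
      T.br1 (x, ν) (μ, v) = (No.Bo (D.D0 x) v, S.br1 x v + ν • D.D1 v)) ∧
  (∀ (μ : K) (v : g1), T.sq (μ, v) = (S.sq v, 0)) ∧
  (∀ (ν μ : K) (x : g0) (v : g1), M.Bo (x, ν) (μ, v) = No.Bo x v + ν * μ)

end Defs

end Char2DoubleExt

namespace Char2DoubleExt

section DodExtension

variable {K : Type} [Field K] {a0 a1 : Type}
variable [AddCommGroup a0] [Module K a0] [AddCommGroup a1] [Module K a1]

/-- An odd derivation is a derivation of the bracket of two odd elements. -/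
theorem OddDer.map_br11 {S : SuperAlg K a0 a1} (D : OddDer K a0 a1 S) (f g : a1) :
    D.D0 (S.br11 f g) = S.br1 (D.D1 f) g + S.br1 (D.D1 g) f := by
  have h := D.der_sq (f + g)
  simp only [S.sq_add, map_add, LinearMap.add_apply, D.der_sq] at h
  linear_combination (norm := module) h

/-- The bracket on the even part of the `D_od`-extension. -/
def dodBr0 (S : SuperAlg K a0 a1) (No : OddNIS K a0 a1 S) (D : OddDer K a0 a1 S) :
    (K × a0) →ₗ[K] (K × a0) →ₗ[K] (K × a0) :=
  LinearMap.mk₂ K (fun p q => (No.Bo q.2 (D.D0 p.2), S.br0 p.2 q.2))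
    (by intros; simp) (by intros; simp) (by intros; simp) (by intros; simp)

/-- The action of the even part on the odd part of the `D_od`-extension. -/
def dodBr1 (S : SuperAlg K a0 a1) (D : OddDer K a0 a1 S) :
    (K × a0) →ₗ[K] (a1 × K) →ₗ[K] (a1 × K) :=
  LinearMap.mk₂ K (fun p v => (S.br1 p.2 v.1 + v.2 • D.D0 p.2, 0))
    (by intros; ext <;> simp; module) (by intros; ext <;> simp; module)
    (by intros; ext <;> simp; module) (by intros; ext <;> simp; module)

/-- The bracket of two odd elements of the `D_od`-extension. -/
def dodBr11 (S : SuperAlg K a0 a1) (No : OddNIS K a0 a1 S) (D : OddDer K a0 a1 S) :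
    (a1 × K) →ₗ[K] (a1 × K) →ₗ[K] (K × a0) :=
  LinearMap.mk₂ K
    (fun v v' => (No.Bo (D.D1 v.1) v'.1, S.br11 v.1 v'.1 + v.2 • D.D1 v'.1 + v'.2 • D.D1 v.1))
    (by intros; ext <;> simp; module) (by intros; ext <;> simp; module)
    (by intros; ext <;> simp; module) (by intros; ext <;> simp; module)

/-- The odd bilinear form on the `D_od`-extension. -/
def dodForm {S : SuperAlg K a0 a1} (No : OddNIS K a0 a1 S) :
    (K × a0) →ₗ[K] (a1 × K) →ₗ[K] K :=
  LinearMap.mk₂ K (fun p v => No.Bo p.2 v.1 + p.1 * v.2)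
    (by intros; simp; ring) (by intros; simp; ring)
    (by intros; simp; ring) (by intros; simp; ring)

variable [CharP K 2]

/-- In characteristic 2 the bracket on the even part is symmetric. -/
theorem SuperAlg.br0_comm (S : SuperAlg K a0 a1) (x y : a0) : S.br0 x y = S.br0 y x := by
  have h2 : (2 : K) = 0 := CharTwo.two_eq_zero
  have h := S.br0_self (x + y)
  simp only [map_add, LinearMap.add_apply, S.br0_self] at h
  linear_combination (norm := module) h - h2 • S.br0 y x

/-- The `D_od`-extension of a Lie superalgebra with an odd NIS form. -/
def dodExtension (S : SuperAlg K a0 a1) (No : OddNIS K a0 a1 S)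
    (D : OddDer K a0 a1 S) (w : a0) (al : a1 → K) (m : K)
    (hdata : DodDataOdd K a0 a1 S No D w al) : SuperAlg K (K × a0) (a1 × K) where
  br0 := dodBr0 S No D
  br1 := dodBr1 S D
  br11 := dodBr11 S No D
  sq v := (v.2 * v.2 * m + al v.1, S.sq v.1 + (v.2 * v.2) • w + v.2 • D.D1 v.1)
  sq_smul := by
    obtain ⟨-, -, -, -, -, -, hal, -⟩ := hdata
    rintro c ⟨f, μ⟩
    ext
    · simp [hal]; ring
    · simp [S.sq_smul]; module
  sq_add := by
    obtain ⟨-, -, -, -, -, -, -, hal⟩ := hdata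
    rintro ⟨f, μ⟩ ⟨g, ν⟩
    have h2 : (2 : K) = 0 := CharTwo.two_eq_zero
    ext
    · simp [dodBr11]
      linear_combination hal f g + μ * ν * m * h2
    · simp [dodBr11, S.sq_add]
      linear_combination (norm := module) (μ * ν) • h2 • w
  br0_self := by
    rintro ⟨r, x⟩
    simp [dodBr0, hdata.2.2.1, S.br0_self]
  br11_comm := by
    rintro ⟨f, μ⟩ ⟨g, ν⟩
    have h2 : (2 : K) = 0 := CharTwo.two_eq_zero
    ext
    · simp [dodBr11]
      linear_combination hdata.2.1 f g - No.Bo (D.D1 g) f * h2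
    · simp [dodBr11, S.br11_comm f g]
      module
  jacobi0 := by
    rintro ⟨r, x⟩ ⟨s, y⟩ ⟨t, z⟩
    obtain ⟨hB, -⟩ := hdata
    ext
    · simp [dodBr0]
      have h := hB (S.br0 y z) x
      rw [D.der0, map_add, ← No.inv0, ← No.inv0] at h
      rw [S.br0_comm x z] at h
      linear_combination h
    · simpa [dodBr0] using S.jacobi0 x y z
  act_br := by
    rintro ⟨r, x⟩ ⟨s, y⟩ ⟨f, μ⟩
    ext
    · simp [dodBr0, dodBr1, S.act_br, D.der0]
      module
    · simp [dodBr0, dodBr1]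
  jacobi_mix := by
    rintro ⟨r, x⟩ ⟨f, μ⟩ ⟨g, ν⟩
    obtain ⟨-, hB, -, hD, -⟩ := hdata
    have h2 : (2 : K) = 0 := CharTwo.two_eq_zero
    ext
    · simp [dodBr0, dodBr1, dodBr11]
      have h := hB (S.br1 x f) g
      rw [D.der1, map_add, LinearMap.add_apply, No.inv2, No.inv0, No.inv1] at h
      linear_combination h + (μ * No.Bo (D.D1 g) (D.D0 x) + ν * No.Bo (D.D1 f) (D.D0 x)) * h2
    · simp [dodBr0, dodBr1, dodBr11, hD, D.der1]
      rw [S.br11_comm f (D.D0 x), S.br11_comm g (D.D0 x)]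
      linear_combination (norm := module) S.jacobi_mix x f g
        + h2 • (μ • S.br0 x (D.D1 g) + ν • S.br0 x (D.D1 f) + (μ * ν) • S.br0 w x
          + ν • S.br11 (D.D0 x) f + μ • S.br11 (D.D0 x) g)
  sq_br0 := by
    rintro ⟨f, μ⟩ ⟨r, x⟩
    obtain ⟨hB, -, -, hD, -, hw, -⟩ := hdata
    have h2 : (2 : K) = 0 := CharTwo.two_eq_zero
    ext
    · simp [dodBr0, dodBr1, dodBr11, D.der_sq, hw]
      have h := hB (D.D1 f) x
      rw [No.inv1]
      linear_combination μ * h - μ * h2 * No.Bo (D.D1 f) (D.D0 x)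
    · simp [dodBr0, dodBr1, dodBr11, hD, D.der1, S.sq_br0, S.br0_comm (D.D1 f) x]
      rw [S.br11_comm f (D.D0 x)]
      linear_combination (norm := module) - h2 • μ • S.br11 (D.D0 x) f
  sq_br1 := by
    rintro ⟨f, μ⟩ ⟨g, ν⟩
    obtain ⟨-, -, -, -, hD', hw, -⟩ := hdata
    have h2 : (2 : K) = 0 := CharTwo.two_eq_zero
    ext
    · simp [dodBr1, dodBr11, D.der_sq, D.map_br11, hD', hw, S.sq_br1]
      linear_combination (norm := module) - h2 • μ • S.br1 (D.D1 g) f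
    · simp [dodBr1]

/-- The odd NIS form on the `D_od`-extension. -/
def dodExtensionNIS (S : SuperAlg K a0 a1) (No : OddNIS K a0 a1 S)
    (D : OddDer K a0 a1 S) (w : a0) (al : a1 → K) (m : K)
    (hdata : DodDataOdd K a0 a1 S No D w al) :
    OddNIS K (K × a0) (a1 × K) (dodExtension S No D w al m hdata) where
  Bo := dodForm No
  nondeg0 := by
    rintro ⟨r, x⟩ h
    have hx : x = 0 := No.nondeg0 x fun f => by simpa [dodForm] using h (f, 0)
    have hr : r = 0 := by simpa [dodForm] using h (0, 1)
    simp [hx, hr]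
  nondeg1 := by
    rintro ⟨f, μ⟩ h
    have hf : f = 0 := No.nondeg1 f fun x => by simpa [dodForm] using h (0, x)
    have hμ : μ = 0 := by simpa [dodForm] using h (1, 0)
    simp [hf, hμ]
  inv0 := by
    rintro ⟨r, x⟩ ⟨s, y⟩ ⟨f, μ⟩
    obtain ⟨hB, -⟩ := hdata
    have h2 : (2 : K) = 0 := CharTwo.two_eq_zero
    simp [dodForm, dodExtension, dodBr0, dodBr1, No.inv0]
    linear_combination μ * hB x y - h2 * μ * No.Bo x (D.D0 y)
  inv1 := by
    rintro ⟨r, x⟩ ⟨s, y⟩ ⟨f, μ⟩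
    obtain ⟨hB, -⟩ := hdata
    have h2 : (2 : K) = 0 := CharTwo.two_eq_zero
    simp [dodForm, dodExtension, dodBr1]
    linear_combination No.inv1 x y f + μ * hB x y - h2 * μ * No.Bo x (D.D0 y)
  inv2 := by
    rintro ⟨f, μ⟩ ⟨g, ν⟩ ⟨h, ξ⟩
    obtain ⟨-, hB, -⟩ := hdata
    have h2 : (2 : K) = 0 := CharTwo.two_eq_zero
    simp [dodForm, dodExtension, dodBr11]
    linear_combination No.inv2 f g h + ν * hB f h + ξ * hB f g
      - h2 * (ν * No.Bo (D.D1 h) f + ξ * No.Bo (D.D1 g) f)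

end DodExtension

/-- Theorem 4.1 of the paper: the `D_od`-extension of a
NIS-Lie superalgebra `(a, B_a)` in characteristic 2 with `B_a` odd, by means of
an odd derivation `D`, an even element `a₀ = w`, a quadratic form `α` with polar
form `B_a(D·,·)`, and a scalar `m ∈ K`, is again a NIS-Lie superalgebra with an
odd form: there is a Lie superalgebra structure on `g = Kx ⊕ a ⊕ Ke` (`x` even,
`e` odd) with the prescribed squaring, bracket and odd bilinear form. -/
theorem stmt10 (K : Type) [Field K] [CharP K 2] (a0 a1 : Type)
    [AddCommGroup a0] [Module K a0] [AddCommGroup a1] [Module K a1]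
    [FiniteDimensional K a0] [FiniteDimensional K a1]
    (S : SuperAlg K a0 a1) (No : OddNIS K a0 a1 S)
    (D : OddDer K a0 a1 S) (w : a0) (al : a1 → K) (m : K)
    (hdata : DodDataOdd K a0 a1 S No D w al) :
    ∃ (T : SuperAlg K (K × a0) (a1 × K)) (M : OddNIS K (K × a0) (a1 × K) T),
      DodExtOddFormulas K a0 a1 S No D w al m T M :=
  ⟨dodExtension S No D w al m hdata, dodExtensionNIS S No D w al m hdata,
    fun _ _ _ _ => rfl, fun _ _ _ _ => rfl, fun _ _ => rfl, fun _ _ _ _ => rfl⟩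

end Char2DoubleExt
end

section
/- Let (g,B_g) be an irreducible finite-dimensional NIS-Lie superalgebra over a field K of characteristic 2 with B_g odd. If z(g)_0 ≠ {0}, then (g,B_g) is obtained as a D_od-extension (odd-form type, with an even central element x and an odd element e) of a NIS-Lie superalgebra (a,B_a) of dimension dim(g) − 2. -/
namespace Char2DoubleExt

/-- The projection onto the kernel of a functional `φ` along a vector `x` with `φ x = 1`. -/
def projKer {K V : Type} [Field K] [AddCommGroup V] [Module K V] (φ : V →ₗ[K] K) (x : V)
    (h : φ x = 1) : V →ₗ[K] LinearMap.ker φ :=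
  (LinearMap.id - φ.smulRight x).codRestrict _ fun y => by simp [h]

theorem coe_projKer {K V : Type} [Field K] [AddCommGroup V] [Module K V] (φ : V →ₗ[K] K) (x : V)
    (h : φ x = 1) (y : V) : (projKer φ x h y : V) = y - φ y • x := rfl

theorem projKer_of_mem {K V : Type} [Field K] [AddCommGroup V] [Module K V] (φ : V →ₗ[K] K)
    (x : V) (h : φ x = 1) (y : LinearMap.ker φ) : projKer φ x h y = y := by
  apply Subtype.ext
  rw [coe_projKer, LinearMap.mem_ker.1 y.2, zero_smul, sub_zero]

theorem span_singleton_inf_ker_eq_bot {K V : Type} [Field K] [AddCommGroup V] [Module K V]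
    (φ : V →ₗ[K] K) {x : V} (h : φ x ≠ 0) : Submodule.span K {x} ⊓ LinearMap.ker φ = ⊥ := by
  rw [eq_bot_iff]
  rintro y ⟨hy, hφ⟩
  obtain ⟨c, rfl⟩ := Submodule.mem_span_singleton.1 hy
  have hc : c * φ x = 0 := by simpa using hφ
  simp [(mul_eq_zero.1 hc).resolve_right h]

section Reduction

variable {K : Type} [Field K] {g0 g1 : Type}
variable [AddCommGroup g0] [Module K g0] [AddCommGroup g1] [Module K g1]
variable {S : SuperAlg K g0 g1} (No : OddNIS K g0 g1 S)

theorem SuperAlg.br0_comm_add (S : SuperAlg K g0 g1) (x y : g0) :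
    S.br0 x y + S.br0 y x = 0 := by
  simpa [S.br0_self] using S.br0_self (x + y)

theorem SuperAlg.br0_eq_zero_of_left (S : SuperAlg K g0 g1) {x : g0}
    (hx : ∀ y, S.br0 x y = 0) (y : g0) : S.br0 y x = 0 := by
  simpa [hx] using S.br0_comm_add x y

theorem SuperAlg.sq_zero (S : SuperAlg K g0 g1) : S.sq 0 = 0 := by
  simpa using S.sq_smul 0 0

theorem SuperAlg.br11_self [CharP K 2] (S : SuperAlg K g0 g1) (f : g1) : S.br11 f f = 0 := by
  have two_smul_eq_zero {V : Type} [AddCommGroup V] [Module K V] (v : V) : v + v = 0 := by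
    rw [← two_smul K, CharTwo.two_eq_zero, zero_smul]
  have h := S.sq_add f f
  rw [two_smul_eq_zero f, S.sq_zero, two_smul_eq_zero, zero_add] at h
  exact h.symm

variable {x : g0} {e : g1} (hxe : No.Bo x e = 1)

/-- The projection of the even part onto the orthogonal of `e` along `x`. -/
def evenProj : g0 →ₗ[K] LinearMap.ker (No.Bo.flip e) := projKer (No.Bo.flip e) x hxe

theorem coe_evenProj (y : g0) : (evenProj No hxe y : g0) = y - No.Bo y e • x := rfl

theorem evenProj_of_mem (y : LinearMap.ker (No.Bo.flip e)) : evenProj No hxe y = y :=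
  projKer_of_mem _ _ _ y

theorem br0_evenProj (hx0 : ∀ y, S.br0 x y = 0) (y z : g0) :
    S.br0 (evenProj No hxe y) z = S.br0 y z := by
  simp [coe_evenProj, hx0]

theorem br0_evenProj_right (hx0 : ∀ y, S.br0 x y = 0) (y z : g0) :
    S.br0 z (evenProj No hxe y) = S.br0 z y := by
  simp [coe_evenProj, S.br0_eq_zero_of_left hx0]

theorem br1_evenProj (hx1 : ∀ f, S.br1 x f = 0) (y : g0) (f : g1) :
    S.br1 (evenProj No hxe y) f = S.br1 y f := by
  simp [coe_evenProj, hx1]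

theorem Bo_evenProj (y : g0) (f : LinearMap.ker (No.Bo x)) :
    No.Bo (evenProj No hxe y) f = No.Bo y f := by
  simp [coe_evenProj, LinearMap.mem_ker.1 f.2]

theorem br1_mem_ker (hx0 : ∀ y, S.br0 x y = 0) (y : g0) (f : g1) :
    S.br1 y f ∈ LinearMap.ker (No.Bo x) := by
  rw [LinearMap.mem_ker, ← No.inv0, hx0, map_zero, LinearMap.zero_apply]

theorem Bo_br11_comm (f g : g1) : No.Bo (S.br11 f g) e = No.Bo (S.br11 e f) g := by
  rw [No.inv2, No.inv2]

theorem br11_mem_ker [CharP K 2] (f : g1) : S.br11 e f ∈ LinearMap.ker (No.Bo.flip e) := by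
  rw [LinearMap.mem_ker, LinearMap.flip_apply, Bo_br11_comm, S.br11_self, map_zero,
    LinearMap.zero_apply]

variable (hx0 : ∀ y, S.br0 x y = 0) (hx1 : ∀ f, S.br1 x f = 0)

/-- The superalgebra structure on `x^⊥ / Kx`, realised on the orthogonal complement of the
hyperbolic plane spanned by the central element `x` and `e`. -/
def reduction : SuperAlg K (LinearMap.ker (No.Bo.flip e)) (LinearMap.ker (No.Bo x)) where
  br0 := LinearMap.mk₂ K (fun u v => evenProj No hxe (S.br0 u v))
    (by simp) (by simp) (by simp) (by simp)
  br1 := LinearMap.mk₂ K (fun u f => ⟨S.br1 u f, br1_mem_ker No hx0 u f⟩)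
    (fun _ _ _ => Subtype.ext (by simp)) (fun _ _ _ => Subtype.ext (by simp))
    (fun _ _ _ => Subtype.ext (by simp)) (fun _ _ _ => Subtype.ext (by simp))
  br11 := LinearMap.mk₂ K (fun f g => evenProj No hxe (S.br11 f g))
    (by simp) (by simp) (by simp) (by simp)
  sq f := evenProj No hxe (S.sq f)
  sq_smul c f := by simp [S.sq_smul]
  sq_add f g := by simp [S.sq_add]
  br0_self u := by simp [S.br0_self]
  br11_comm f g := by simp [S.br11_comm (f : g1)]
  jacobi0 u v w := by
    simp only [LinearMap.mk₂_apply, br0_evenProj_right No hxe hx0]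
    rw [← map_add, ← map_add, S.jacobi0, map_zero]
  act_br u v f := Subtype.ext <| by
    simpa [br1_evenProj No hxe hx1] using S.act_br u v f
  jacobi_mix u f g := by
    simp only [LinearMap.mk₂_apply, br0_evenProj_right No hxe hx0]
    rw [← map_add, ← map_add, S.jacobi_mix, map_zero]
  sq_br0 f u := by
    simp only [LinearMap.mk₂_apply, br0_evenProj No hxe hx0, S.sq_br0]
  sq_br1 f g := Subtype.ext <| by
    simpa [br1_evenProj No hxe hx1] using S.sq_br1 f g

/-- The restriction of the odd form to the reduction is a NIS. -/
def reductionNIS : OddNIS K _ _ (reduction No hxe hx0 hx1) where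
  Bo := No.Bo.domRestrict₁₂ _ _
  nondeg0 u hu := Subtype.ext <| No.nondeg0 u fun f => by
    have h := hu (projKer (No.Bo x) e hxe f)
    rwa [LinearMap.domRestrict₁₂_apply, coe_projKer, map_sub, map_smul,
      show No.Bo u e = 0 from LinearMap.mem_ker.1 u.2, smul_zero, sub_zero] at h
  nondeg1 f hf := Subtype.ext <| No.nondeg1 f fun y => by
    rw [← Bo_evenProj No hxe]
    exact hf (evenProj No hxe y)
  inv0 u v f := (Bo_evenProj No hxe _ f).trans (No.inv0 u v f)
  inv1 u v f := No.inv1 u v f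
  inv2 f g h := (Bo_evenProj No hxe _ h).trans <|
    (No.inv2 f g h).trans (Bo_evenProj No hxe _ f).symm

/-- The odd derivation of the reduction induced by bracketing with `e`. -/
def reductionDer [CharP K 2] : OddDer K _ _ (reduction No hxe hx0 hx1) where
  D0 := (S.br1.flip e).restrict (fun u _ => br1_mem_ker No hx0 u e)
  D1 := (S.br11 e).restrict (fun f _ => br11_mem_ker No f)
  der0 u v := Subtype.ext <| (br1_evenProj No hxe hx1 _ e).trans (S.act_br u v e)
  der1 u f := by
    have h := S.jacobi_mix u e f
    have hneg (v : g0) : -v = v := by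
      rw [← neg_one_smul K, CharTwo.neg_eq, one_smul]
    rw [add_assoc, add_eq_zero_iff_eq_neg, neg_add, hneg, hneg] at h
    have h' : S.br11 e (S.br1 u f) = S.br11 (S.br1 u e) f + S.br0 u (S.br11 e f) := by
      rw [h, S.br11_comm _ (f : g1), add_comm, add_assoc]
      nth_rewrite 2 [← hneg (S.br11 f (S.br1 u e))]
      rw [add_neg_cancel, add_zero]
    rw [← evenProj_of_mem No hxe ((S.br11 e).restrict _ _)]
    exact (congrArg (evenProj No hxe) h').trans (map_add _ _ _)
  der_sq f := Subtype.ext <| (br1_evenProj No hxe hx1 _ e).trans <| by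
    rw [S.sq_br1, S.br11_comm]
    rfl

theorem reduction_dodDataOdd [CharP K 2] :
    DodDataOdd K _ _ (reduction No hxe hx0 hx1) (reductionNIS No hxe hx0 hx1)
      (reductionDer No hxe hx0 hx1) (evenProj No hxe (S.sq e)) (fun f => No.Bo (S.sq f) e) := by
  refine ⟨fun u v => ?_, fun f g => ?_, fun u => ?_, fun u => ?_, fun f => ?_, ?_,
    fun c f => ?_, fun f g => ?_⟩
  · change No.Bo v (S.br1 u e) + No.Bo u (S.br1 v e) = 0
    rw [No.inv1, CharTwo.add_self_eq_zero]
  · change No.Bo (S.br11 e f) g + No.Bo (S.br11 e g) f = 0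
    rw [← Bo_br11_comm, ← Bo_br11_comm, S.br11_comm, CharTwo.add_self_eq_zero]
  · change No.Bo u (S.br1 u e) = 0
    rw [← No.inv0, S.br0_self, map_zero, LinearMap.zero_apply]
  · rw [← evenProj_of_mem No hxe ((reductionDer No hxe hx0 hx1).D1 _)]
    change evenProj No hxe (S.br11 e (S.br1 u e)) =
      evenProj No hxe (S.br0 (evenProj No hxe (S.sq e)) u)
    rw [br0_evenProj No hxe hx0, S.sq_br0]
  · apply Subtype.ext
    change S.br1 (S.br11 e f) e = S.br1 (evenProj No hxe (S.sq e)) f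
    rw [br1_evenProj No hxe hx1, S.sq_br1]
  · apply Subtype.ext
    change S.br1 (evenProj No hxe (S.sq e)) e = 0
    rw [br1_evenProj No hxe hx1, S.sq_br1, S.br11_self, map_zero, LinearMap.zero_apply]
  · simp [S.sq_smul]
  · change No.Bo (S.sq (f + g)) e - No.Bo (S.sq f) e - No.Bo (S.sq g) e = No.Bo (S.br11 e f) g
    rw [S.sq_add, ← Bo_br11_comm]
    simp only [map_add, LinearMap.add_apply]
    ring

end Reduction

/-- Proposition 4.2 of the paper: an irreducible
finite-dimensional NIS-Lie superalgebra `(g, B_g)` in characteristic 2 with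
`B_g` odd and `z(g)_0 ≠ {0}` is obtained as a `D_od`-extension (odd-form type,
with an even central `x` and an odd element `e`) of a NIS-Lie superalgebra of
dimension `dim g − 2`. -/
theorem stmt11 (K : Type) [Field K] [CharP K 2] (g0 g1 : Type)
    [AddCommGroup g0] [Module K g0] [AddCommGroup g1] [Module K g1]
    [FiniteDimensional K g0] [FiniteDimensional K g1]
    (S : SuperAlg K g0 g1) (No : OddNIS K g0 g1 S)
    (hirr : OddIrreducible K g0 g1 S No)
    (hz : ∃ x : g0, x ≠ 0 ∧ (∀ y, S.br0 x y = 0) ∧ (∀ f, S.br1 x f = 0)) :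
    ∃ (x : g0) (e : g1) (A0 : Submodule K g0) (A1 : Submodule K g1)
      (T : SuperAlg K ↥A0 ↥A1) (M : OddNIS K ↥A0 ↥A1 T)
      (D : OddDer K ↥A0 ↥A1 T) (w : A0) (al : ↥A1 → K) (m : K),
      -- the data `(D, w, α)` satisfies the compatibility conditions
      DodDataOdd K ↥A0 ↥A1 T M D w al ∧
      -- the decomposition `g = Kx ⊕ a ⊕ Ke`, with `dim a = dim g − 2`
      x ≠ 0 ∧ e ≠ 0 ∧
      Submodule.span K ({x} : Set g0) ⊓ A0 = ⊥ ∧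
      Submodule.span K ({x} : Set g0) ⊔ A0 = ⊤ ∧
      Submodule.span K ({e} : Set g1) ⊓ A1 = ⊥ ∧
      Submodule.span K ({e} : Set g1) ⊔ A1 = ⊤ ∧
      Module.finrank K ↥A0 + 1 = Module.finrank K g0 ∧
      Module.finrank K ↥A1 + 1 = Module.finrank K g1 ∧
      -- `x` is central
      (∀ y : g0, S.br0 x y = 0) ∧ (∀ f : g1, S.br1 x f = 0) ∧
      -- the bracket, action and squaring of `g` are those of the extension
      (∀ u v : A0, S.br0 ↑u ↑v = M.Bo v (D.D0 u) • x + ↑(T.br0 u v)) ∧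
      (∀ (u : A0) (f : A1), S.br1 ↑u ↑f = ↑(T.br1 u f)) ∧
      (∀ u : A0, S.br1 ↑u e = ↑(D.D0 u)) ∧
      (∀ f g : A1, S.br11 ↑f ↑g = M.Bo (D.D1 f) g • x + ↑(T.br11 f g)) ∧
      (∀ f : A1, S.br11 e ↑f = ↑(D.D1 f)) ∧
      (∀ f : A1, S.sq ↑f = al f • x + ↑(T.sq f)) ∧
      S.sq e = m • x + ↑w ∧
      -- the odd bilinear form of `g` is that of the extension
      (∀ (u : A0) (f : A1), No.Bo ↑u ↑f = M.Bo u f) ∧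
      No.Bo x e = 1 ∧ (∀ f : A1, No.Bo x ↑f = 0) ∧ (∀ u : A0, No.Bo ↑u e = 0) := by
  obtain ⟨x, hx, hx0, hx1⟩ := hz
  obtain ⟨e, hxe⟩ : ∃ e, No.Bo x e = 1 := by
    by_contra! h
    refine hx (No.nondeg0 x fun f => ?_)
    by_contra hf
    exact h ((No.Bo x f)⁻¹ • f) (by simp [hf])
  have hdecomp (y : g0) : y = No.Bo y e • x + evenProj No hxe y := by
    simp [coe_evenProj]
  have hxe0 : No.Bo x e ≠ 0 := by simp [hxe]
  refine ⟨x, e, LinearMap.ker (No.Bo.flip e), LinearMap.ker (No.Bo x),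
    reduction No hxe hx0 hx1, reductionNIS No hxe hx0 hx1, reductionDer No hxe hx0 hx1,
    evenProj No hxe (S.sq e), fun f => No.Bo (S.sq f) e, No.Bo (S.sq e) e,
    reduction_dodDataOdd No hxe hx0 hx1, hx, ?_,
    span_singleton_inf_ker_eq_bot (No.Bo.flip e) hxe0,
    LinearMap.span_singleton_sup_ker_eq_top (No.Bo.flip e) hxe0,
    span_singleton_inf_ker_eq_bot (No.Bo x) hxe0,
    LinearMap.span_singleton_sup_ker_eq_top (No.Bo x) hxe0,
    Module.Dual.finrank_ker_add_one_of_ne_zero (f := No.Bo.flip e) ?_,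
    Module.Dual.finrank_ker_add_one_of_ne_zero (f := No.Bo x) ?_,
    hx0, hx1, fun u v => ?_, fun u f => rfl, fun u => rfl, fun f g => ?_, fun f => rfl,
    fun f => hdecomp _, hdecomp _, fun u f => rfl, hxe, fun f => f.2, fun u => u.2⟩
  · rintro rfl
    simp at hxe0
  · intro h
    exact hxe0 (LinearMap.congr_fun h x)
  · intro h
    exact hxe0 (LinearMap.congr_fun h e)
  · change S.br0 u v = No.Bo v (S.br1 u e) • x + (evenProj No hxe (S.br0 u v) : g0)
    rw [No.inv1, ← No.inv0]
    exact hdecomp _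
  · change S.br11 f g = No.Bo (S.br11 e f) g • x + (evenProj No hxe (S.br11 f g) : g0)
    rw [← Bo_br11_comm]
    exact hdecomp _

end Char2DoubleExt
end

section
/- Let (a,B_a) be a NIS-Lie superalgebra over a field K of characteristic 2 with B_a odd, and let (g,B_g) and (g̃,B_{g̃}) be D_ev-extensions of (a,B_a) by even derivations D and D̃ respectively, with g = Kx ⊕ a ⊕ Ke and g̃ = Kx̃ ⊕ a ⊕ Kẽ. Suppose π_0 is an isometry of (a,B_a), λ ∈ K is nonzero, and t ∈ a_0 satisfy π_0^{-1}∘D̃∘π_0 = λD + ad_t on a. Then the map π : g → g̃ defined by π(u) = π_0(u) + B_a(t,u)x̃ for u ∈ a, π(x) = λx̃, and π(e) = λ^{-1}(ẽ + π_0(t)), is an adapted isometry. -/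
namespace Char2DoubleExt

/-- The even component `(u, ν) ↦ (p u + (c⁻¹ ν) p t, c⁻¹ ν)` of the map between two
`D_ev`-extensions induced by `p`, a nonzero scalar `c` and a vector `t`. -/
def extEquivEven {K V : Type} [Field K] [AddCommGroup V] [Module K V]
    (p : V ≃ₗ[K] V) (c : K) (hc : c ≠ 0) (t : V) : (V × K) ≃ₗ[K] (V × K) where
  toFun z := (p z.1 + (c⁻¹ * z.2) • p t, c⁻¹ * z.2)
  map_add' z w := by
    ext
    · simp only [Prod.fst_add, Prod.snd_add, map_add]
      module
    · simp only [Prod.snd_add]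
      ring
  map_smul' r z := by
    ext
    · simp only [Prod.smul_fst, Prod.smul_snd, map_smul, smul_eq_mul, RingHom.id_apply]
      module
    · simp only [Prod.smul_snd, smul_eq_mul, RingHom.id_apply]
      ring
  invFun z := (p.symm z.1 - z.2 • t, c * z.2)
  left_inv z := by ext <;> simp [hc]
  right_inv z := by ext <;> simp [hc]

/-- The odd component `(μ, v) ↦ (c μ + b v, p v)` of the map between two
`D_ev`-extensions induced by `p`, a nonzero scalar `c` and a linear form `b`. -/
def extEquivOdd {K V : Type} [Field K] [AddCommGroup V] [Module K V]
    (p : V ≃ₗ[K] V) (c : K) (hc : c ≠ 0) (b : V →ₗ[K] K) : (K × V) ≃ₗ[K] (K × V) where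
  toFun z := (c * z.1 + b z.2, p z.2)
  map_add' z w := by
    ext
    · simp only [Prod.fst_add, Prod.snd_add, map_add]
      ring
    · simp
  map_smul' r z := by
    ext
    · simp only [Prod.smul_fst, Prod.smul_snd, map_smul, smul_eq_mul, RingHom.id_apply]
      ring
    · simp
  invFun z := (c⁻¹ * (z.1 - b (p.symm z.2)), p.symm z.2)
  left_inv z := by ext <;> simp [hc]
  right_inv z := by ext <;> simp [hc]

/-- The bracket of odd elements is determined by the squaring, so an additive map
preserving squarings preserves it. -/
theorem SuperAlg.map_br11_of_map_sq {K g0 g1 h0 h1 : Type} [Field K]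
    [AddCommGroup g0] [Module K g0] [AddCommGroup g1] [Module K g1]
    [AddCommGroup h0] [Module K h0] [AddCommGroup h1] [Module K h1]
    (S : SuperAlg K g0 g1) (T : SuperAlg K h0 h1) (e0 : g0 →ₗ[K] h0) (e1 : g1 →ₗ[K] h1)
    (h : ∀ f, e0 (S.sq f) = T.sq (e1 f)) (f g : g1) :
    e0 (S.br11 f g) = T.br11 (e1 f) (e1 g) := by
  have hfg := h (f + g)
  rw [S.sq_add, map_add e1, T.sq_add, map_add, map_add, h, h] at hfg
  exact add_left_cancel hfg

/-- In characteristic 2 the bracket of even elements is symmetric. -/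
theorem SuperAlg.br0_comm_s15 {K g0 g1 : Type} [Field K] [CharP K 2]
    [AddCommGroup g0] [Module K g0] [AddCommGroup g1] [Module K g1]
    (S : SuperAlg K g0 g1) (x y : g0) : S.br0 x y = S.br0 y x := by
  have h := S.br0_self (x + y)
  simp only [map_add, LinearMap.add_apply, S.br0_self, zero_add, add_zero] at h
  rw [eq_neg_of_add_eq_zero_left h, eq_neg_iff_add_eq_zero, ← two_smul K,
    CharTwo.two_eq_zero, zero_smul]

/-- Theorem 4.11 of the paper: let `(g, B_g)` and
`(g̃, B_g̃)` be `D_ev`-extensions (odd form, odd `x`, even `e`) of the same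
NIS-Lie superalgebra `(a, B_a)` by even derivations `D` and `D̃`. Given an
isometry `π₀` of `(a, B_a)`, a nonzero `λ ∈ K` and `t ∈ a_0` with
`π₀⁻¹ ∘ D̃ ∘ π₀ = λD + ad_t` on `a`, the prescribed map `π` is an adapted
isometry `g → g̃`. -/
theorem stmt15 (K : Type) [Field K] [CharP K 2] (a0 a1 : Type)
    [AddCommGroup a0] [Module K a0] [AddCommGroup a1] [Module K a1]
    [FiniteDimensional K a0] [FiniteDimensional K a1]
    (S : SuperAlg K a0 a1) (No : OddNIS K a0 a1 S)
    (D Dt : EvenDer K a0 a1 S)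
    (hdata : DevDataOdd K a0 a1 S No D)
    (hdatat : DevDataOdd K a0 a1 S No Dt)
    (T : SuperAlg K (a0 × K) (K × a1)) (M : OddNIS K (a0 × K) (K × a1) T)
    (hT : DevExtOddFormulas K a0 a1 S No D T M)
    (Tt : SuperAlg K (a0 × K) (K × a1)) (Mt : OddNIS K (a0 × K) (K × a1) Tt)
    (hTt : DevExtOddFormulas K a0 a1 S No Dt Tt Mt)
    (p0 : OddIsometry K a0 a1 a0 a1 S No S No)
    (lam : K) (hlam : lam ≠ 0) (t : a0)
    (hrel0 : ∀ u : a0, p0.e0.symm (Dt.D0 (p0.e0 u)) = lam • D.D0 u + S.br0 t u)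
    (hrel1 : ∀ f : a1, p0.e1.symm (Dt.D1 (p0.e1 f)) = lam • D.D1 f + S.br1 t f) :
    ∃ π : OddIsometry K (a0 × K) (K × a1) (a0 × K) (K × a1) T M Tt Mt,
      (∀ (u : a0) (ν : K),
        π.e0 (u, ν) = (p0.e0 u + (lam⁻¹ * ν) • p0.e0 t, lam⁻¹ * ν)) ∧
      (∀ (μ : K) (v : a1), π.e1 (μ, v) = (lam * μ + No.Bo t v, p0.e1 v)) ∧
      -- adaptedness: `π(Kx ⊕ a) = Kx̃ ⊕ a`
      (∀ u : a0, ∃ u' : a0, π.e0 (u, 0) = (u', 0)) := by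
  obtain ⟨hbr0, hbr1, hsq, hBo⟩ := hT
  obtain ⟨hbr0t, hbr1t, hsqt, hBot⟩ := hTt
  have two : (2 : K) = 0 := CharTwo.two_eq_zero
  have hD0 : ∀ u, Dt.D0 (p0.e0 u) = lam • p0.e0 (D.D0 u) + p0.e0 (S.br0 t u) := fun u => by
    rw [← map_smul, ← map_add, ← hrel0, LinearEquiv.apply_symm_apply]
  have hD1 : ∀ f, Dt.D1 (p0.e1 f) = lam • p0.e1 (D.D1 f) + p0.e1 (S.br1 t f) := fun f => by
    rw [← map_smul, ← map_add, ← hrel1, LinearEquiv.apply_symm_apply]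
  have he0 : ∀ (u : a0) (ν : K), extEquivEven p0.e0 lam hlam t (u, ν)
      = (p0.e0 u + (lam⁻¹ * ν) • p0.e0 t, lam⁻¹ * ν) := fun _ _ => rfl
  have he1 : ∀ (μ : K) (v : a1), extEquivOdd p0.e1 lam hlam (No.Bo t) (μ, v)
      = (lam * μ + No.Bo t v, p0.e1 v) := fun _ _ => rfl
  have hmap_sq : ∀ f, extEquivEven p0.e0 lam hlam t (T.sq f)
      = Tt.sq (extEquivOdd p0.e1 lam hlam (No.Bo t) f) := by
    rintro ⟨μ, v⟩
    simp [hsq, hsqt, he0, he1, p0.map_sq]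
  refine ⟨
    { e0 := extEquivEven p0.e0 lam hlam t
      e1 := extEquivOdd p0.e1 lam hlam (No.Bo t)
      map_br0 := ?_
      map_br1 := ?_
      map_br11 := T.map_br11_of_map_sq Tt (extEquivEven p0.e0 lam hlam t).toLinearMap
        (extEquivOdd p0.e1 lam hlam (No.Bo t)).toLinearMap hmap_sq
      map_sq := hmap_sq
      map_Bo := ?_ }, he0, he1, fun u => ⟨p0.e0 u, by simp [he0]⟩⟩
  · rintro ⟨x, ν⟩ ⟨y, ν'⟩
    rw [hbr0, he0, he0, he0, hbr0t]
    ext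
    · simp only [map_add, map_smul, LinearMap.add_apply, LinearMap.smul_apply, hD0,
        ← p0.map_br0, S.br0_self, map_zero, S.br0_comm_s15 x t]
      match_scalars <;> grind
    · simp
  · rintro ⟨x, ν⟩ ⟨μ, v⟩
    rw [hbr1, he0, he1, he1, hbr1t]
    ext
    · simp only [map_add, map_smul, LinearMap.add_apply, LinearMap.smul_apply, hD0,
        p0.map_Bo, S.br0_self, map_zero, No.inv0, smul_eq_mul, add_zero]
      field_simp
      linear_combination ν * hdata t v - ν * No.Bo (D.D0 t) v * two
    · simp only [map_add, map_smul, LinearMap.add_apply, LinearMap.smul_apply, hD1,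
        ← p0.map_br1]
      match_scalars <;> grind
  · rintro ⟨x, ν⟩ ⟨μ, v⟩
    rw [he0, he1, hBot, hBo]
    simp only [map_add, map_smul, LinearMap.add_apply, LinearMap.smul_apply, p0.map_Bo,
      smul_eq_mul]
    field_simp
    linear_combination ν * No.Bo t v * two

end Char2DoubleExt
end

section
/- Let (a,B_a) be a NIS-Lie superalgebra over a field K of characteristic 2 with B_a odd, and let D and D' be even derivations each satisfying B_a(D(u),v) + B_a(u,D(v)) = 0 for all u,v ∈ a. If D and D' are cohomologous, i.e. D = λD' + ad_t for some nonzero λ ∈ K and t ∈ a_0, then the D_ev-extensions of (a,B_a) by D and by D' are isometric via an adapted isometry. -/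
namespace Char2DoubleExt

/-- Corollary 4.13 of the paper: two cohomologous even
derivations `D = λD' + ad_t` (with `λ ≠ 0`, `t ∈ a_0`) of a NIS-Lie
superalgebra `(a, B_a)` in characteristic 2 with `B_a` odd, each satisfying
`B_a(Du,v) + B_a(u,Dv) = 0`, define isometric `D_ev`-extensions (odd-form
type), via an adapted isometry. -/
theorem stmt16 (K : Type) [Field K] [CharP K 2] (a0 a1 : Type)
    [AddCommGroup a0] [Module K a0] [AddCommGroup a1] [Module K a1]
    [FiniteDimensional K a0] [FiniteDimensional K a1]
    (S : SuperAlg K a0 a1) (No : OddNIS K a0 a1 S)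
    (D D' : EvenDer K a0 a1 S)
    (hdata : DevDataOdd K a0 a1 S No D)
    (hdata' : DevDataOdd K a0 a1 S No D')
    (lam : K) (hlam : lam ≠ 0) (t : a0)
    (hcoh0 : ∀ x : a0, D.D0 x = lam • D'.D0 x + S.br0 t x)
    (hcoh1 : ∀ f : a1, D.D1 f = lam • D'.D1 f + S.br1 t f)
    (T : SuperAlg K (a0 × K) (K × a1)) (M : OddNIS K (a0 × K) (K × a1) T)
    (hT : DevExtOddFormulas K a0 a1 S No D T M)
    (T' : SuperAlg K (a0 × K) (K × a1)) (M' : OddNIS K (a0 × K) (K × a1) T')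
    (hT' : DevExtOddFormulas K a0 a1 S No D' T' M') :
    ∃ π : OddIsometry K (a0 × K) (K × a1) (a0 × K) (K × a1) T M T' M',
      ∀ u : a0, ∃ u' : a0, π.e0 (u, 0) = (u', 0) := by
  obtain ⟨hb0, hb1, hsq, hB⟩ := hT
  obtain ⟨hb0', hb1', hsq', hB'⟩ := hT'
  have add_self0 : ∀ z : a0, z + z = 0 := fun z => by
    rw [← two_smul K z, CharTwo.two_eq_zero, zero_smul]
  have br0_comm : ∀ x y : a0, S.br0 x y = S.br0 y x := fun x y => by
    have h := S.br0_self (x + y)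
    simp only [map_add, LinearMap.add_apply, S.br0_self, zero_add, add_zero] at h
    exact add_left_cancel (h.trans (add_self0 _).symm)
  have Bo_skew : ∀ (x : a0) (v : a1), No.Bo x (D'.D1 v) = No.Bo (D'.D0 x) v := fun x v =>
    (CharTwo.add_eq_zero.mp (hdata' x v)).symm
  have Bo_ad_self : ∀ v : a1, No.Bo t (S.br1 t v) = 0 := fun v => by
    rw [← No.inv0, S.br0_self, map_zero, LinearMap.zero_apply]
  let e0 : (a0 × K) ≃ₗ[K] (a0 × K) :=
    { toFun := fun p => (p.1 + p.2 • t, lam * p.2)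
      invFun := fun p => (p.1 - (lam⁻¹ * p.2) • t, lam⁻¹ * p.2)
      map_add' := fun p q => by
        ext
        · simp only [Prod.fst_add, Prod.snd_add]; module
        · simp only [Prod.snd_add]; ring
      map_smul' := fun c p => by
        ext
        · simp only [Prod.smul_fst, Prod.smul_snd, smul_eq_mul, RingHom.id_apply]; module
        · simp only [Prod.smul_snd, smul_eq_mul, RingHom.id_apply]; ring
      left_inv := fun p => by simp [hlam]
      right_inv := fun p => by simp [hlam] }
  let e1 : (K × a1) ≃ₗ[K] (K × a1) :=
    { toFun := fun p => (lam⁻¹ * (p.1 + No.Bo t p.2), p.2)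
      invFun := fun p => (lam * p.1 - No.Bo t p.2, p.2)
      map_add' := fun p q => by
        ext
        · simp only [Prod.fst_add, Prod.snd_add, map_add]; ring
        · rfl
      map_smul' := fun c p => by
        ext
        · simp only [Prod.smul_fst, Prod.smul_snd, smul_eq_mul, map_smul, RingHom.id_apply]
          ring
        · rfl
      left_inv := fun p => by simp [hlam]
      right_inv := fun p => by simp [hlam] }
  have he0 : ∀ x ν, e0 (x, ν) = (x + ν • t, lam * ν) := fun _ _ => rfl
  have he1 : ∀ μ v, e1 (μ, v) = (lam⁻¹ * (μ + No.Bo t v), v) := fun _ _ => rfl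
  have map_sq : ∀ f, e0 (T.sq f) = T'.sq (e1 f) := by
    rintro ⟨μ, v⟩
    rw [hsq, he0, he1, hsq', zero_smul, add_zero, mul_zero]
  refine ⟨⟨e0, e1, ?_, ?_, ?_, map_sq, ?_⟩, fun u => ⟨u, ?_⟩⟩
  · rintro ⟨x, ν⟩ ⟨y, ν'⟩
    rw [hb0, he0, he0, he0, hb0', hcoh0, hcoh0, zero_smul, add_zero, mul_zero]
    simp only [map_add, map_smul, LinearMap.add_apply, LinearMap.smul_apply, S.br0_self,
      br0_comm x t, smul_zero, add_zero, Prod.mk.injEq, and_true]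
    rw [← sub_eq_zero, ← neg_eq_zero, ← add_self0 ((lam * ν * ν') • D'.D0 t)]
    module
  · rintro ⟨x, ν⟩ ⟨μ, v⟩
    rw [hb1, he0, he1, he1, hb1', hcoh0, hcoh1]
    ext
    · simp only [map_add, map_smul, LinearMap.add_apply, LinearMap.smul_apply, smul_eq_mul,
        No.inv0, Bo_skew, Bo_ad_self]
      field_simp
      linear_combination No.Bo t (S.br1 x v) * CharTwo.two_eq_zero (R := K)
    · simp only [map_add, map_smul, LinearMap.add_apply, LinearMap.smul_apply]
      module
  · intro f g
    have h := map_sq (f + g)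
    rw [T.sq_add, map_add, map_add, map_add, T'.sq_add, map_sq, map_sq] at h
    exact add_left_cancel h
  · rintro ⟨x, ν⟩ ⟨μ, v⟩
    rw [he0, he1, hB', hB]
    simp only [map_add, map_smul, LinearMap.add_apply, LinearMap.smul_apply, smul_eq_mul]
    field_simp
    linear_combination ν * No.Bo t v * CharTwo.two_eq_zero (R := K)
  · change e0 (u, 0) = (u, 0)
    rw [he0, zero_smul, add_zero, mul_zero]

end Char2DoubleExt
end
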